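/- Let (Γ,m,f) be a Dyer graph with associated Dyer system (D,V), and let v ∈ V with st(v) ≠ V. Then in ℤ[[t]], 𝒢_{(D,V)}(t)^{−1} = 𝒢_{(D_{V∖{v}}, V∖{v})}(t)^{−1} + 𝒢_{(D_{st(v)}, st(v))}(t)^{−1} − 𝒢_{(D_{lk(v)}, lk(v))}(t)^{−1}. -/

import Mathlib

/-!
For `X ⊆ V` let `M_X` be the set of elements of `D` of minimal length in their coset `D_X g`. The
identity follows from two facts.

* Every element of `D` is uniquely a product `h * a` with `h ∈ D_X` and `a ∈ M_X`, and the lengths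
  add up; moreover, word length in `D_X` with respect to `X` is the restriction of word length in
  `D`. Hence `𝒢_D = 𝒢_{D_X} · M_X(t)`, that is, `𝒢_{D_X}⁻¹ = M_X(t) · 𝒢_D⁻¹`
  (`DyerGraph.inverse_growthSeries`).
* `M_{V∖{v}} ∪ M_{st(v)} = M_{lk(v)}` and `M_{V∖{v}} ∩ M_{st(v)} = M_V = {1}`, so that
  `M_{lk(v)}(t) + 1 = M_{V∖{v}}(t) + M_{st(v)}(t)` (`DyerGraph.lenSeries_minReps_link`).
  Multiplying this equation by `𝒢_D⁻¹` gives the theorem.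

Both facts rest on an inversion cocycle `N : D → (D → D)` (`DyerGraph.coc`), which generalizes the
inversion set of an element of a Coxeter group: sending a generator `x` to the pair of the function
concentrated at `x` with value `x` and of `x` itself respects the defining relations and extends to
a homomorphism of `D` to the semidirect product `(D → D) ⋊ D`; `N` is its first component. The value
`N(g)(r)` is a power of `r`. If it is nontrivial, then `r` is the reflection of a syllable in every
word for `g`; this is the exchange property (`DyerGraph.exchange`). The sum over all `r` of the
lengths of `N(g)(r)` in `⟨r⟩` is the word length of `g`, and `M_X` is the set of `a` with
`N(a)(x) = 1` for all `x ∈ X`.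

For the union in the second fact one needs that `N(g)(v)` and `N(g)(y)` cannot both be nontrivial
when `y ∉ st(v)` (`DyerGraph.adj_of_coc_ne_one`). By exchange, the `D_{{v,y}}`-component of `g`
would have a reduced word starting with `v` and another one starting with `y`. Both are mapped to
alternating words in the amalgam of two copies of `D` over `D_{lk(v)}`, and the normal form theorem
for amalgams rules this out. That the syllables stay outside `D_{lk(v)}` is
`DyerGraph.zpow_eq_one_of_mem`, proved with the reflection representation and with retractions onto
the cyclic groups of generators of order other than two.
-/

open scoped Classical

/-- The word length of `g` with respect to the alphabet `S ∪ S⁻¹`. -/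
noncomputable def wordLength {G : Type*} [Group G] (S : Set G) (g : G) : ℕ :=
  sInf {n | ∃ w : List G, w.length = n ∧ (∀ a ∈ w, a ∈ S ∪ S⁻¹) ∧ w.prod = g}

/-- The syllable length of `g` with respect to `S`. -/
noncomputable def sylLength {G : Type*} [Group G] (S : Set G) (g : G) : ℕ :=
  sInf {n | ∃ w : List (G × ℤ), w.length = n ∧ (∀ p ∈ w, p.1 ∈ S) ∧
    (w.map fun p => p.1 ^ p.2).prod = g}

/-- The growth series of a subset `A` of a group `G` with respect to a generating set `S`:
the coefficient of `t^n` is the number of elements of `A` of word length `n`. -/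
noncomputable def growthSeries {G : Type*} [Group G] (S : Set G) (A : Set G) :
    PowerSeries ℤ :=
  PowerSeries.mk fun n => (Set.ncard {g ∈ A | wordLength S g = n} : ℤ)

/-- A Dyer graph. -/
structure DyerGraph (V : Type*) where
  Adj : V → V → Prop
  symm : ∀ {x y}, Adj x y → Adj y x
  loopless : ∀ x, ¬ Adj x x
  m : V → V → ℕ
  m_symm : ∀ x y, m x y = m y x
  m_ge : ∀ {x y}, Adj x y → 2 ≤ m x y
  f : V → ℕ∞
  f_ge : ∀ x, 2 ≤ f x
  compat : ∀ {x y}, Adj x y → m x y ≠ 2 → f x = 2 ∧ f y = 2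

namespace DyerGraph

variable {V : Type*} (Γ : DyerGraph V)

/-- The alternating word `π(x, y, n) = xyxy⋯` of length `n` in the free group. -/
def altWord (x y : V) : ℕ → FreeGroup V
  | 0 => 1
  | n + 1 => FreeGroup.of x * altWord y x n

/-- The defining relations of the Dyer group. -/
def rels : Set (FreeGroup V) :=
  {r | ∃ x : V, Γ.f x ≠ ⊤ ∧ r = FreeGroup.of x ^ (Γ.f x).toNat} ∪
  {r | ∃ x y : V, Γ.Adj x y ∧
      r = altWord x y (Γ.m x y) * (altWord y x (Γ.m x y))⁻¹}

/-- The Dyer group associated to a Dyer graph. -/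
abbrev DyerGroup := PresentedGroup Γ.rels

/-- The standard generator of the Dyer group corresponding to a vertex. -/
def gen (x : V) : Γ.DyerGroup := PresentedGroup.of x

/-- The standard parabolic subgroup generated by `X ⊆ V`. -/
def parabolic (X : Set V) : Subgroup Γ.DyerGroup := Subgroup.closure (Γ.gen '' X)

/-- The set of vertices with `f x = 2`. -/
def V2 : Set V := {x | Γ.f x = 2}

/-- The set of vertices with `2 < f x < ∞`. -/
def Vp : Set V := {x | 2 < Γ.f x ∧ Γ.f x ≠ ⊤}

/-- The set of vertices with `f x = ∞`. -/
def Vinf : Set V := {x | Γ.f x = ⊤}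

/-- A Dyer group is of spherical type if the graph is complete and `D_2` is finite. -/
def Spherical : Prop :=
  (∀ x y : V, x ≠ y → Γ.Adj x y) ∧ (Γ.parabolic Γ.V2 : Set Γ.DyerGroup).Finite

/-- The set `A_X` of `X`-minimal elements. -/
def Amin (X : Set V) : Set Γ.DyerGroup :=
  {g | ∀ h ∈ Γ.parabolic X,
    sylLength (Set.range Γ.gen) g ≤ sylLength (Set.range Γ.gen) (g * h)}

/-- The set `B_X = A_X ∖ ⋃_{X ⊊ Y} A_Y`. -/
def Bmin (X : Set V) : Set Γ.DyerGroup :=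
  Γ.Amin X \ ⋃ (Y : Set V) (_ : X ⊂ Y), Γ.Amin Y

end DyerGraph

namespace DyerGraph

/-! ### Homomorphisms out of a Dyer group -/

/-- The alternating product `abab⋯` with `n` factors in a group. -/
def altProd {G : Type*} [Group G] (a b : G) : ℕ → G
  | 0 => 1
  | n + 1 => a * altProd b a n

section Lift

variable {V : Type*} (Γ : DyerGraph V) {G : Type*} [Group G]

theorem lift_altWord (F : V → G) (x y : V) (n : ℕ) :
    FreeGroup.lift F (altWord x y n) = altProd (F x) (F y) n := by
  induction n generalizing x y with
  | zero => simp [altWord, altProd]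
  | succ n ih => simp [altWord, altProd, ih]

theorem map_altProd {K : Type*} [Group K] (φ : G →* K) (a b : G) (n : ℕ) :
    φ (altProd a b n) = altProd (φ a) (φ b) n := by
  induction n generalizing a b with
  | zero => simp [altProd]
  | succ n ih => simp [altProd, ih]

theorem altProd_two (a b : G) : altProd a b 2 = a * b := by
  simp [altProd]

theorem altProd_mul_inv {a b : G} (ha : a ^ 2 = 1) (hb : b ^ 2 = 1) (n : ℕ) :
    altProd a b n * (altProd b a n)⁻¹ = (a * b) ^ n := by
  have ha' : a⁻¹ = a := by
    rw [inv_eq_iff_mul_eq_one, ← pow_two, ha]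
  have hb' : b⁻¹ = b := by
    rw [inv_eq_iff_mul_eq_one, ← pow_two, hb]
  induction n generalizing a b with
  | zero => simp [altProd]
  | succ n ih =>
    have h := ih hb ha hb' ha'
    have h2 : (a * b) ^ (n + 1) = a * (b * a) ^ n * b := by
      rw [pow_succ']
      have : ∀ k : ℕ, b * (a * b) ^ k = (b * a) ^ k * b := by
        intro k
        induction k with
        | zero => simp
        | succ k ihk => rw [pow_succ, ← mul_assoc, ihk, pow_succ]; group
      rw [mul_assoc, this, mul_assoc]
    rw [h2, ← h]
    simp only [altProd, mul_inv_rev, hb', mul_assoc]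

/-- The universal property of the presentation of a Dyer group. -/
theorem exists_hom (F : V → G)
    (h1 : ∀ x, Γ.f x ≠ ⊤ → F x ^ (Γ.f x).toNat = 1)
    (h2 : ∀ x y, Γ.Adj x y → altProd (F x) (F y) (Γ.m x y) = altProd (F y) (F x) (Γ.m x y)) :
    ∃ φ : Γ.DyerGroup →* G, ∀ x, φ (Γ.gen x) = F x := by
  have h : ∀ r ∈ Γ.rels, FreeGroup.lift F r = 1 := by
    rintro r (⟨x, hx, rfl⟩ | ⟨x, y, hxy, rfl⟩)
    · simpa using h1 x hx
    · rw [map_mul, map_inv, lift_altWord, lift_altWord, h2 x y hxy, mul_inv_cancel]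
  exact ⟨PresentedGroup.toGroup h, fun x => PresentedGroup.toGroup.of h⟩

theorem gen_pow (x : V) (hx : Γ.f x ≠ ⊤) : Γ.gen x ^ (Γ.f x).toNat = 1 := by
  have := PresentedGroup.one_of_mem (rels := Γ.rels) (Or.inl ⟨x, hx, rfl⟩)
  simpa [gen, PresentedGroup.of] using this

theorem gen_sq (x : V) (hx : Γ.f x = 2) : Γ.gen x ^ 2 = 1 := by
  have := Γ.gen_pow x (by rw [hx]; exact ENat.natCast_ne_top 2)
  rwa [hx] at this

theorem gen_braid {x y : V} (h : Γ.Adj x y) :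
    altProd (Γ.gen x) (Γ.gen y) (Γ.m x y) = altProd (Γ.gen y) (Γ.gen x) (Γ.m x y) := by
  have h1 := PresentedGroup.one_of_mem (rels := Γ.rels) (Or.inr ⟨x, y, h, rfl⟩)
  have e : PresentedGroup.mk Γ.rels = FreeGroup.lift Γ.gen := by
    ext x; simp [gen, PresentedGroup.of]
  rw [e, map_mul, map_inv, lift_altWord, lift_altWord] at h1
  exact mul_inv_eq_one.mp h1

theorem closure_range_gen : Subgroup.closure (Set.range Γ.gen) = ⊤ :=
  PresentedGroup.closure_range_of Γ.rels

end Lift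

/-! ### The reflection representation and powers of a generator in a parabolic subgroup -/

section Rep

open Module Polynomial.Chebyshev

/-- Two reflections whose pairing is `4 cos² (π / m)` have a product of order dividing `m`. -/
theorem reflection_pow_eq_one {E : Type*} [AddCommGroup E] [Module ℝ E] {x y : E}
    {f g : Dual ℝ E} (hf : f x = 2) (hg : g y = 2) (m : ℕ) (hm : 3 ≤ m)
    (h : f y * g x = 4 * Real.cos (Real.pi / m) ^ 2) :
    (reflection hf * reflection hg) ^ m = 1 := by
  have hm0 : (0 : ℝ) < m := by positivity
  set θ : ℝ := 2 * Real.pi / m with hθ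
  have ht : 2 * Real.cos θ = f y * g x - 2 := by
    rw [h, hθ, mul_div_assoc, Real.cos_two_mul]; ring
  have hmθ : (m : ℝ) * θ = 2 * Real.pi := by rw [hθ]; field_simp
  have hsin : Real.sin θ ≠ 0 := by
    apply ne_of_gt
    apply Real.sin_pos_of_pos_of_lt_pi
    · rw [hθ]; positivity
    · rw [hθ, div_lt_iff₀ hm0]
      have : (3 : ℝ) ≤ m := by exact_mod_cast hm
      nlinarith [Real.pi_pos]
  have S0 : ∀ n : ℤ, (S ℝ n).eval (2 * Real.cos θ) = Real.sin ((n + 1) * θ) / Real.sin θ := by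
    intro n
    rw [eq_div_iff hsin]
    exact S_two_mul_real_cos θ n
  ext z
  rw [reflection_mul_reflection_pow_apply hf hg m z (2 * Real.cos θ) ht]
  rcases Nat.even_or_odd' m with ⟨p, hp | hp⟩
  · have e1 : ((m : ℤ) - 2) / 2 = (p : ℤ) - 1 := by omega
    have e2 : ((m : ℤ) - 1) / 2 = (p : ℤ) - 1 := by omega
    have hz : (S ℝ ((p : ℤ) - 1)).eval (2 * Real.cos θ) = 0 := by
      rw [S0]
      have : (((p : ℤ) - 1 : ℤ) + 1 : ℝ) * θ = Real.pi := by
        have hmp : (m : ℝ) = 2 * p := by exact_mod_cast hp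
        rw [hmp] at hmθ
        push_cast; linarith
      rw [this]; simp
    rw [e1, e2, hz]; simp
  · have e1 : ((m : ℤ) - 3) / 2 = (p : ℤ) - 1 := by omega
    have e2 : ((m : ℤ) - 1) / 2 = (p : ℤ) := by omega
    have e3 : (m : ℤ) / 2 = (p : ℤ) := by omega
    have e4 : ((m : ℤ) - 2) / 2 = (p : ℤ) - 1 := by omega
    have hz : (S ℝ (p : ℤ)).eval (2 * Real.cos θ)
        + (S ℝ ((p : ℤ) - 1)).eval (2 * Real.cos θ) = 0 := by
      rw [S0, S0]
      have : (((p : ℤ) - 1 : ℤ) + 1 : ℝ) * θ = 2 * Real.pi - ((p : ℤ) + 1) * θ := by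
        have hmp : (m : ℝ) = 2 * p + 1 := by exact_mod_cast hp
        rw [hmp] at hmθ
        push_cast; linarith
      rw [this, Real.sin_two_pi_sub]; ring
    rw [e1, e2, e3, e4, hz]; simp

variable {V : Type*} (Γ : DyerGraph V)

/-- The matrix `2B` of the canonical bilinear form, with entry `-2` at non-adjacent pairs. -/
noncomputable def pairing (x y : V) : ℝ :=
  if x = y then 2 else if Γ.Adj x y then -2 * Real.cos (Real.pi / Γ.m x y) else -2

theorem pairing_comm (x y : V) : Γ.pairing x y = Γ.pairing y x := by
  have h : Γ.Adj x y ↔ Γ.Adj y x := ⟨Γ.symm, Γ.symm⟩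
  simp only [pairing, h, Γ.m_symm x y, eq_comm]

/-- The linear form pairing a vector with the basis vector at `x` under `2B`. -/
noncomputable def coroot (x : V) : Dual ℝ (V →₀ ℝ) :=
  Finsupp.lift ℝ ℝ V (fun y => Γ.pairing x y)

theorem coroot_single (x y : V) : Γ.coroot x (Finsupp.single y 1) = Γ.pairing x y := by
  simp [coroot]

theorem coroot_self (x : V) : Γ.coroot x (Finsupp.single x 1) = 2 := by
  rw [coroot_single, pairing, if_pos rfl]

/-- The reflection representation: generators of order `2` act as the reflections of the Coxeter
group on `V2`, all other generators act trivially. -/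
theorem exists_rep : ∃ φ : Γ.DyerGroup →* ((V →₀ ℝ) ≃ₗ[ℝ] (V →₀ ℝ)), ∀ x,
    φ (Γ.gen x) = if Γ.f x = 2 then reflection (Γ.coroot_self x) else 1 := by
  have hsq : ∀ x, reflection (Γ.coroot_self x) ^ 2 = 1 := by
    intro x
    rw [pow_two, ← inv_eq_iff_mul_eq_one, reflection_inv]
  apply Γ.exists_hom
  · intro x hx
    split_ifs with h
    · rw [h]; exact hsq x
    · simp
  · intro x y hxy
    have hne : x ≠ y := by rintro rfl; exact Γ.loopless _ hxy
    by_cases hm : Γ.m x y = 2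
    · rw [hm, altProd_two, altProd_two]
      split_ifs with h1 h2 h2
      · have p0 : Γ.pairing x y = 0 := by
          simp [pairing, hne, hxy, hm]
        have p1 : Γ.pairing y x = 0 := by rw [pairing_comm, p0]
        ext1 z
        simp only [LinearEquiv.mul_apply, reflection_apply, map_sub, map_smul, coroot_single, p0, p1]
        simp only [zero_smul, sub_zero]
        abel
      all_goals simp
    · obtain ⟨h1, h2⟩ := Γ.compat hxy hm
      rw [if_pos h1, if_pos h2, ← mul_inv_eq_one, altProd_mul_inv (hsq x) (hsq y)]
      apply reflection_pow_eq_one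
      · have := Γ.m_ge hxy; omega
      · rw [coroot_single, coroot_single, pairing_comm Γ y x]
        simp only [pairing, if_neg hne, if_pos hxy]
        ring

theorem gen_notMem_parabolic {x : V} (hx : Γ.f x = 2) {X : Set V} (hxX : x ∉ X) :
    Γ.gen x ∉ Γ.parabolic X := by
  obtain ⟨φ, hφ⟩ := Γ.exists_rep
  intro hmem
  -- Elements of `D_X` move every vector by a vector supported on `X`.
  have key : ∀ g ∈ Γ.parabolic X, ∀ u : V →₀ ℝ, (φ g u) x = u x := by
    intro g hg
    induction hg using Subgroup.closure_induction with
    | mem g hg =>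
      obtain ⟨y, hy, rfl⟩ := hg
      intro u
      have hyx : y ≠ x := by rintro rfl; exact hxX hy
      rw [hφ]
      split_ifs
      · simp [reflection_apply, hyx]
      · simp
    | one => simp
    | mul a b _ _ ha hb => intro u; rw [map_mul, LinearEquiv.mul_apply, ha, hb]
    | inv a _ ha =>
      intro u
      have := ha (φ a⁻¹ u)
      rw [← LinearEquiv.mul_apply, ← map_mul] at this
      simpa using this.symm
  have := key _ hmem (Finsupp.single x 1)
  rw [hφ, if_pos hx, reflection_apply_self] at this
  simp at this
  linarith

/-- A power of a generator outside `X` that lies in `D_X` is trivial. For a generator of order `2` this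
is seen in the reflection representation; any other generator spans a retract of `D` onto which
`D_X` projects trivially. -/
theorem zpow_eq_one_of_mem {x : V} {X : Set V} (hxX : x ∉ X) (k : ℤ)
    (h : Γ.gen x ^ k ∈ Γ.parabolic X) : Γ.gen x ^ k = 1 := by
  by_cases hx : Γ.f x = 2
  · have hsq := Γ.gen_sq x hx
    rcases Int.even_or_odd' k with ⟨p, rfl | rfl⟩
    · rw [zpow_mul]; norm_cast; rw [hsq]; simp
    · exfalso
      rw [zpow_add, zpow_mul] at h
      norm_cast at h
      rw [hsq] at h
      exact Γ.gen_notMem_parabolic hx hxX (by simpa using h)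
  · obtain ⟨ρ, hρ⟩ := Γ.exists_hom (fun y => if y = x then Γ.gen x else 1)
      (by
        intro y hy
        split_ifs with e
        · subst e; exact Γ.gen_pow y hy
        · simp)
      (by
        intro y z hyz
        by_cases hm : Γ.m y z = 2
        · rw [hm, altProd_two, altProd_two]
          split_ifs <;> simp
        · obtain ⟨h1, h2⟩ := Γ.compat hyz hm
          rw [if_neg, if_neg] <;> rintro rfl <;> contradiction)
    have hker : Γ.parabolic X ≤ ρ.ker := by
      rw [parabolic, Subgroup.closure_le]
      rintro _ ⟨y, hy, rfl⟩
      have : y ≠ x := by rintro rfl; exact hxX hy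
      simp [MonoidHom.mem_ker, hρ, this]
    have := hker h
    rw [MonoidHom.mem_ker, map_zpow, hρ, if_pos rfl] at this
    exact this

end Rep
end DyerGraph

namespace DyerGraph

/-! ### The inversion cocycle -/

section Cocycle

/-- The conjugation action of a group `G` on functions `G → G`, through both argument and value. -/
def conjFun (G : Type*) [Group G] : G →* MulAut (G → G) where
  toFun g :=
    { toFun := fun F r => g * F (g⁻¹ * r * g) * g⁻¹
      invFun := fun F r => g⁻¹ * F (g * r * g⁻¹) * g
      left_inv := fun F => by funext r; simp [mul_assoc]
      right_inv := fun F => by funext r; simp [mul_assoc]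
      map_mul' := fun F F' => by funext r; simp [mul_assoc] }
  map_one' := by ext F r; simp
  map_mul' g h := by ext F r; simp [mul_assoc]

theorem conjFun_apply {G : Type*} [Group G] (g : G) (F : G → G) (r : G) :
    conjFun G g F r = g * F (g⁻¹ * r * g) * g⁻¹ := rfl

/-- The element of `(G → G) ⋊ G` attached to `a : G`: the function concentrated at `a` with
value `a`, paired with `a`. -/
noncomputable def cocElt {G : Type*} [Group G] (a : G) : (G → G) ⋊[conjFun G] G :=
  ⟨fun r => if r = a then a else 1, a⟩

theorem cocElt_pow {G : Type*} [Group G] (a : G) (n : ℕ) :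
    cocElt a ^ n = ⟨fun r => if r = a then a ^ n else 1, a ^ n⟩ := by
  induction n with
  | zero => ext r <;> simp
  | succ n ih =>
    rw [pow_succ', ih, cocElt, SemidirectProduct.mul_def]
    ext r
    · have : a⁻¹ * r * a = a ↔ r = a := by
        rw [mul_assoc, inv_mul_eq_iff_eq_mul, mul_left_inj]
      simp only [Pi.mul_apply, conjFun_apply, this]
      split_ifs
      · rw [← pow_succ', mul_inv_eq_iff_eq_mul.mpr (pow_succ a n), pow_succ']
      · simp
    · simp [pow_succ']

theorem altProd_odd {G : Type*} [Group G] (a b : G) (p : ℕ) :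
    altProd a b (2 * p + 1) = (a * b) ^ p * a := by
  induction p with
  | zero => simp [altProd]
  | succ p ih =>
    have : 2 * (p + 1) + 1 = (2 * p + 1) + 1 + 1 := by ring
    rw [this, altProd, altProd, ih, pow_succ']
    simp [mul_assoc]

theorem altProd_odd_conj {G : Type*} [Group G] {a : G} (b : G) (ha : a ^ 2 = 1) (i : ℕ) :
    a * altProd b a (2 * i + 1) * a⁻¹ = altProd a b (2 * (i + 1) + 1) := by
  have ha' : a⁻¹ = a := by
    rw [inv_eq_iff_mul_eq_one, ← pow_two, ha]
  rw [altProd_odd, altProd_odd, ha', pow_succ, ← mul_assoc, ← mul_assoc, mul_pow_mul]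

/-- For involutions `a`, `b`, the function component of an alternating product of cocycle
elements sends `r` to `r ^ k`, where `k` is the number of occurrences of `r` among the first `n`
odd alternating products. -/
theorem altProd_cocElt {G : Type*} [Group G] {a b : G} (ha : a ^ 2 = 1) (hb : b ^ 2 = 1) (n : ℕ) :
    altProd (cocElt a) (cocElt b) n =
      ⟨fun r => r ^ ((Finset.range n).filter (fun i => altProd a b (2 * i + 1) = r)).card,
        altProd a b n⟩ := by
  induction n generalizing a b with
  | zero =>
    ext r
    · simp only [Finset.range_zero, Finset.filter_empty, Finset.card_empty, pow_zero]
      simp [altProd]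
    · simp [altProd]
  | succ n ih =>
    rw [altProd, ih hb ha, cocElt, SemidirectProduct.mul_def]
    ext r
    · simp only [Pi.mul_apply, conjFun_apply]
      have hc : ∀ k : ℕ, a * (a⁻¹ * r * a) ^ k * a⁻¹ = r ^ k := by
        intro k
        have := conj_pow (i := k) (a := a) (b := a⁻¹ * r * a)
        rw [← this]; congr 1; group
      rw [hc]
      have e1 : ∀ i, altProd b a (2 * i + 1) = a⁻¹ * r * a ↔ altProd a b (2 * (i + 1) + 1) = r := by
        intro i
        rw [← altProd_odd_conj b ha]
        constructor
        · intro h; rw [h]; group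
        · rintro rfl; group
      simp only [e1]
      have e2 : ((Finset.range (n + 1)).filter (fun i => altProd a b (2 * i + 1) = r)).card =
          (if r = a then 1 else 0) +
          ((Finset.range n).filter (fun i => altProd a b (2 * (i + 1) + 1) = r)).card := by
        simp only [Finset.card_filter]
        rw [Finset.sum_range_succ', add_comm]
        simp [altProd, eq_comm]
      rw [e2, pow_add]
      congr 1
      split_ifs with h
      · simp [h]
      · simp
    · simp [altProd]

/-- The braid relation lifts: both words list the same reflections, in opposite order. -/
theorem cocElt_braid {G : Type*} [Group G] {a b : G} (ha : a ^ 2 = 1) (hb : b ^ 2 = 1) (m : ℕ)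
    (h : altProd a b m = altProd b a m) :
    altProd (cocElt a) (cocElt b) m = altProd (cocElt b) (cocElt a) m := by
  rw [altProd_cocElt ha hb, altProd_cocElt hb ha]
  ext r
  · simp only
    congr 1
    simp only [Finset.card_filter]
    rw [← Finset.sum_range_reflect]
    apply Finset.sum_congr rfl
    intro i hi
    rw [Finset.mem_range] at hi
    have ha' : a⁻¹ = a := by
      rw [inv_eq_iff_mul_eq_one, ← pow_two, ha]
    have hb' : b⁻¹ = b := by
      rw [inv_eq_iff_mul_eq_one, ← pow_two, hb]
    have hm : (a * b) ^ m = 1 := by rw [← altProd_mul_inv ha hb, h, mul_inv_cancel]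
    have : altProd a b (2 * (m - 1 - i) + 1) = altProd b a (2 * i + 1) := by
      rw [altProd_odd, altProd_odd]
      have e : (a * b) ^ (m - 1 - i) * (a * b) ^ (i + 1) = 1 := by
        rw [← pow_add, ← hm]; congr 1; omega
      have e' : ((a * b) ^ (i + 1))⁻¹ = (b * a) ^ (i + 1) := by
        rw [← inv_pow, mul_inv_rev, ha', hb']
      rw [eq_inv_of_mul_eq_one_left e, e', pow_succ, mul_assoc, mul_assoc, ← pow_two, ha, mul_one]
    rw [this]
  · simp [h]

theorem cocElt_comm {G : Type*} [Group G] {a b : G} (h : a * b = b * a) :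
    cocElt a * cocElt b = cocElt b * cocElt a := by
  simp only [cocElt, SemidirectProduct.mul_def]
  ext r
  · have e1 : a⁻¹ * r * a = b ↔ r = b := by
      rw [mul_assoc, inv_mul_eq_iff_eq_mul, h, mul_left_inj]
    have e2 : b⁻¹ * r * b = a ↔ r = a := by
      rw [mul_assoc, inv_mul_eq_iff_eq_mul, ← h, mul_left_inj]
    simp only [Pi.mul_apply, conjFun_apply, e1, e2]
    have e4 : b * a * b⁻¹ = a := by rw [← h]; group
    split_ifs <;> simp [e4, h]
  · exact h

variable {V : Type*} (Γ : DyerGraph V)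

/-- The relations of `D` hold for the elements `cocElt (gen x)`, which makes the function component
of the resulting homomorphism a cocycle. -/
theorem exists_cocycleHom :
    ∃ φ : Γ.DyerGroup →* (Γ.DyerGroup → Γ.DyerGroup) ⋊[conjFun _] Γ.DyerGroup,
    ∀ x, φ (Γ.gen x) = cocElt (Γ.gen x) := by
  apply Γ.exists_hom
  · intro x hx
    rw [cocElt_pow, Γ.gen_pow x hx]
    ext r <;> simp
  · intro x y hxy
    by_cases hm : Γ.m x y = 2
    · have := Γ.gen_braid hxy
      rw [hm, altProd_two, altProd_two] at this ⊢
      exact cocElt_comm this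
    · obtain ⟨h1, h2⟩ := Γ.compat hxy hm
      exact cocElt_braid (Γ.gen_sq x h1) (Γ.gen_sq y h2) _ (Γ.gen_braid hxy)

/-- The inversion cocycle `N`. For a reflection `r`, a conjugate of a generator, `Γ.coc g r` is
the power of `r` contributed to `g` by the syllables of a word for `g` whose reflection is `r`. -/
noncomputable def coc (g : Γ.DyerGroup) : Γ.DyerGroup → Γ.DyerGroup :=
  (Γ.exists_cocycleHom.choose g).left

theorem coc_one (r : Γ.DyerGroup) : Γ.coc 1 r = 1 := by
  simp [coc]

theorem coc_mul (g h r : Γ.DyerGroup) :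
    Γ.coc (g * h) r = Γ.coc g r * (g * Γ.coc h (g⁻¹ * r * g) * g⁻¹) := by
  have hr : ∀ g, (Γ.exists_cocycleHom.choose g).right = g := by
    have : SemidirectProduct.rightHom.comp Γ.exists_cocycleHom.choose = MonoidHom.id _ := by
      apply PresentedGroup.ext
      intro x
      have := congrArg SemidirectProduct.right (Γ.exists_cocycleHom.choose_spec x)
      exact this
    intro g
    exact DFunLike.congr_fun this g
  simp only [coc, map_mul, SemidirectProduct.mul_left, hr, Pi.mul_apply, conjFun_apply]

theorem coc_gen_pow (x : V) (n : ℕ) (r : Γ.DyerGroup) :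
    Γ.coc (Γ.gen x ^ n) r = if r = Γ.gen x then Γ.gen x ^ n else 1 := by
  rw [coc, map_pow, Γ.exists_cocycleHom.choose_spec x, cocElt_pow]

theorem coc_inv (g r : Γ.DyerGroup) :
    Γ.coc g⁻¹ r = g⁻¹ * (Γ.coc g (g * r * g⁻¹))⁻¹ * g := by
  have h := Γ.coc_mul g g⁻¹ (g * r * g⁻¹)
  rw [mul_inv_cancel, coc_one] at h
  have e : g⁻¹ * (g * r * g⁻¹) * g = r := by group
  rw [e] at h
  have := eq_inv_of_mul_eq_one_right h.symm
  rw [← this]; group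

theorem coc_gen_zpow (x : V) (k : ℤ) (r : Γ.DyerGroup) :
    Γ.coc (Γ.gen x ^ k) r = if r = Γ.gen x then Γ.gen x ^ k else 1 := by
  obtain ⟨n, rfl | rfl⟩ := k.eq_nat_or_neg
  · rw [zpow_natCast, coc_gen_pow]
  · rw [zpow_neg, zpow_natCast, coc_inv, coc_gen_pow]
    have : Γ.gen x ^ n * r * (Γ.gen x ^ n)⁻¹ = Γ.gen x ↔ r = Γ.gen x := by
      rw [mul_inv_eq_iff_eq_mul, ← pow_succ', pow_succ, mul_right_inj]
    simp only [this]
    split_ifs <;> simp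

end Cocycle
end DyerGraph

namespace DyerGraph

/-! ### Syllable words and the exchange property -/

section Exchange

variable {V : Type*} (Γ : DyerGraph V)

/-- The group element represented by a word of syllables `(x, k)`, each standing for `x ^ k`. -/
def val (w : List (V × ℤ)) : Γ.DyerGroup := (w.map fun p => Γ.gen p.1 ^ p.2).prod

@[simp] theorem val_nil : Γ.val [] = 1 := rfl

@[simp] theorem val_cons (x : V) (k : ℤ) (w : List (V × ℤ)) :
    Γ.val ((x, k) :: w) = Γ.gen x ^ k * Γ.val w := rfl

@[simp] theorem val_append (w w' : List (V × ℤ)) : Γ.val (w ++ w') = Γ.val w * Γ.val w' := by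
  simp [val]

/-- The word `w` has all its syllables in `X` and no word in `X` for the same element has fewer
syllables. -/
def Red (X : Set V) (w : List (V × ℤ)) : Prop :=
  (∀ p ∈ w, p.1 ∈ X) ∧
    ∀ w' : List (V × ℤ), (∀ p ∈ w', p.1 ∈ X) → Γ.val w' = Γ.val w → w.length ≤ w'.length

theorem gen_mem_parabolic {X : Set V} {x : V} (hx : x ∈ X) : Γ.gen x ∈ Γ.parabolic X :=
  Subgroup.subset_closure ⟨x, hx, rfl⟩

theorem val_mem {X : Set V} {w : List (V × ℤ)} (hw : ∀ p ∈ w, p.1 ∈ X) :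
    Γ.val w ∈ Γ.parabolic X := by
  apply Subgroup.list_prod_mem
  simp only [List.mem_map]
  rintro _ ⟨p, hp, rfl⟩
  exact Subgroup.zpow_mem _ (Γ.gen_mem_parabolic (hw p hp)) _

theorem exists_val {X : Set V} {g : Γ.DyerGroup} (hg : g ∈ Γ.parabolic X) :
    ∃ w, (∀ p ∈ w, p.1 ∈ X) ∧ Γ.val w = g := by
  induction hg using Subgroup.closure_induction with
  | mem g hg =>
    obtain ⟨x, hx, rfl⟩ := hg
    exact ⟨[(x, 1)], by simpa using hx, by simp⟩
  | one => exact ⟨[], by simp, rfl⟩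
  | mul a b _ _ ha hb =>
    obtain ⟨w, hw, rfl⟩ := ha
    obtain ⟨w', hw', rfl⟩ := hb
    refine ⟨w ++ w', ?_, by simp⟩
    intro p hp
    rcases List.mem_append.mp hp with h | h
    exacts [hw p h, hw' p h]
  | inv a _ ha =>
    obtain ⟨w, hw, rfl⟩ := ha
    refine ⟨(w.map fun p => (p.1, -p.2)).reverse, ?_, ?_⟩
    · intro p hp
      simp only [List.mem_reverse, List.mem_map] at hp
      obtain ⟨q, hq, rfl⟩ := hp
      exact hw q hq
    · simp [val, List.prod_inv_reverse, Function.comp_def]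

theorem exists_shortest {α : Type*} (P : List α → Prop) (h : ∃ w, P w) :
    ∃ w, P w ∧ ∀ w', P w' → w.length ≤ w'.length := by
  obtain ⟨w, hw, hmin⟩ := exists_minimalFor_of_wellFoundedLT P List.length h
  exact ⟨w, hw, fun w' hw' => (le_total w.length w'.length).elim id (hmin hw')⟩

theorem exists_red {X : Set V} {g : Γ.DyerGroup} (hg : g ∈ Γ.parabolic X) :
    ∃ w, Γ.Red X w ∧ Γ.val w = g := by
  obtain ⟨w, ⟨h1, h2⟩, hmin⟩ := exists_shortest
    (fun w : List (V × ℤ) => (∀ p ∈ w, p.1 ∈ X) ∧ Γ.val w = g) (Γ.exists_val hg)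
  exact ⟨w, ⟨h1, fun w' h' e => hmin w' ⟨h', e.trans h2⟩⟩, h2⟩

theorem mem_parabolic_univ (g : Γ.DyerGroup) : g ∈ Γ.parabolic Set.univ := by
  rw [parabolic, Set.image_univ, closure_range_gen]
  trivial

theorem Red.tail {X : Set V} {p : V × ℤ} {w : List (V × ℤ)} (h : Γ.Red X (p :: w)) :
    Γ.Red X w := by
  obtain ⟨x, k⟩ := p
  refine ⟨fun q hq => h.1 q (List.mem_cons_of_mem _ hq), fun w' hw' e => ?_⟩
  have := h.2 ((x, k) :: w') (by
    intro q hq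
    rcases List.mem_cons.mp hq with rfl | hq
    exacts [h.1 _ List.mem_cons_self, hw' q hq]) (by simp [e])
  simpa using this

/-- Every inversion of `w` is the reflection of one of its syllables. -/
theorem exchange {w : List (V × ℤ)} {r : Γ.DyerGroup} (h : Γ.coc (Γ.val w) r ≠ 1) :
    ∃ w₁ x k w₂, w = w₁ ++ (x, k) :: w₂ ∧ r = Γ.val w₁ * Γ.gen x * (Γ.val w₁)⁻¹ := by
  induction w generalizing r with
  | nil => exact absurd (Γ.coc_one r) h
  | cons p w ih =>
    obtain ⟨x, k⟩ := p
    by_cases hr : r = Γ.gen x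
    · exact ⟨[], x, k, w, rfl, by simp [hr]⟩
    · rw [val_cons, coc_mul, coc_gen_zpow, if_neg hr, one_mul] at h
      have h' : Γ.coc (Γ.val w) ((Γ.gen x ^ k)⁻¹ * r * Γ.gen x ^ k) ≠ 1 := by
        intro e; rw [e] at h; simp at h
      obtain ⟨w₁, y, l, w₂, e, er⟩ := ih h'
      refine ⟨(x, k) :: w₁, y, l, w₂, by rw [e]; rfl, ?_⟩
      have : r = Γ.gen x ^ k * ((Γ.gen x ^ k)⁻¹ * r * Γ.gen x ^ k) * (Γ.gen x ^ k)⁻¹ := by group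
      rw [this, er, val_cons]
      group

/-- The first syllable of a reduced word is not an inversion of the remaining word: otherwise a
later syllable could be moved to the front and merged with it. -/
theorem Red.coc_tail {X : Set V} {x : V} {k : ℤ} {w : List (V × ℤ)}
    (h : Γ.Red X ((x, k) :: w)) : Γ.coc (Γ.val w) (Γ.gen x) = 1 := by
  by_contra hne
  obtain ⟨w₁, y, l, w₂, rfl, er⟩ := Γ.exchange hne
  have e : Γ.gen x ^ l = Γ.val w₁ * Γ.gen y ^ l * (Γ.val w₁)⁻¹ := by
    rw [er, conj_zpow]
  have := h.2 ((x, k + l) :: (w₁ ++ w₂)) (by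
    intro q hq
    simp only [List.mem_cons, List.mem_append] at hq
    rcases hq with rfl | hq | hq
    · exact h.1 (x, k) List.mem_cons_self
    · exact h.1 q (by simp [hq])
    · exact h.1 q (by simp [hq])) (by
    simp only [val_cons, val_append, zpow_add, e]
    group)
  simp at this

theorem Red.coc_head {X : Set V} {x : V} {k : ℤ} {w : List (V × ℤ)}
    (h : Γ.Red X ((x, k) :: w)) : Γ.coc (Γ.val ((x, k) :: w)) (Γ.gen x) = Γ.gen x ^ k := by
  have : (Γ.gen x ^ k)⁻¹ * Γ.gen x * Γ.gen x ^ k = Γ.gen x := by group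
  rw [val_cons, coc_mul, coc_gen_zpow, if_pos rfl, this, h.coc_tail]
  simp

theorem Red.head_ne_one {X : Set V} {x : V} {k : ℤ} {w : List (V × ℤ)}
    (h : Γ.Red X ((x, k) :: w)) : Γ.gen x ^ k ≠ 1 := by
  intro e
  have := h.2 w (fun q hq => h.1 q (List.mem_cons_of_mem _ hq)) (by simp [e])
  simp at this

/-! ### Minimal coset representatives -/

/-- The elements with no inversion among the generators in `X`; they turn out to be the
representatives of minimal length of the cosets `D_X g`. -/
def minReps (X : Set V) : Set Γ.DyerGroup := {a | ∀ x ∈ X, Γ.coc a (Γ.gen x) = 1}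

theorem mem_parabolic_of_coc_ne_one {X : Set V} {h r : Γ.DyerGroup} (hh : h ∈ Γ.parabolic X)
    (hr : Γ.coc h r ≠ 1) : r ∈ Γ.parabolic X := by
  obtain ⟨w, hw, rfl⟩ := Γ.exists_val hh
  obtain ⟨w₁, y, l, w₂, rfl, rfl⟩ := Γ.exchange hr
  have h1 : Γ.val w₁ ∈ Γ.parabolic X := Γ.val_mem (fun p hp => hw p (by simp [hp]))
  have h2 : Γ.gen y ∈ Γ.parabolic X := Γ.gen_mem_parabolic (hw (y, l) (by simp))
  exact mul_mem (mul_mem h1 h2) (inv_mem h1)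

theorem eq_one_of_mem_minReps {X : Set V} {h : Γ.DyerGroup} (hh : h ∈ Γ.parabolic X)
    (hm : h ∈ Γ.minReps X) : h = 1 := by
  obtain ⟨w, hw, rfl⟩ := Γ.exists_red hh
  cases w with
  | nil => rfl
  | cons p w =>
    obtain ⟨x, k⟩ := p
    exact absurd (hw.coc_head.symm.trans (hm x (hw.1 (x, k) List.mem_cons_self))) hw.head_ne_one

/-- Every coset `D_X g` contains an element with no inversion in `D_X`, namely one with the
fewest syllables. -/
theorem exists_decomp (X : Set V) (g : Γ.DyerGroup) :
    ∃ h ∈ Γ.parabolic X, ∃ a, g = h * a ∧ ∀ r ∈ Γ.parabolic X, Γ.coc a r = 1 := by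
  obtain ⟨w, ⟨h, hh, hw⟩, hmin⟩ := exists_shortest
    (fun w : List (V × ℤ) => ∃ h ∈ Γ.parabolic X, g = h * Γ.val w) (by
      obtain ⟨w, -, e⟩ := Γ.exists_val (Γ.mem_parabolic_univ g)
      exact ⟨w, 1, one_mem _, by simp [e]⟩)
  refine ⟨h, hh, Γ.val w, hw, fun r hr => ?_⟩
  by_contra hne
  obtain ⟨w₁, y, l, w₂, rfl, er⟩ := Γ.exchange hne
  have e : r ^ l = Γ.val w₁ * Γ.gen y ^ l * (Γ.val w₁)⁻¹ := by
    rw [er, conj_zpow]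
  have := hmin (w₁ ++ w₂) ⟨h * r ^ l, mul_mem hh (zpow_mem hr _), by
    rw [hw, e]
    simp only [val_cons, val_append]
    group⟩
  simp at this

theorem coc_mul_of_trivial {X : Set V} {h a r : Γ.DyerGroup} (hh : h ∈ Γ.parabolic X)
    (ha : ∀ r ∈ Γ.parabolic X, Γ.coc a r = 1) (hr : r ∈ Γ.parabolic X) :
    Γ.coc (h * a) r = Γ.coc h r := by
  rw [coc_mul, ha _ (mul_mem (mul_mem (inv_mem hh) hr) hh)]
  simp

theorem coc_eq_one_of_mem_minReps {X : Set V} {a r : Γ.DyerGroup} (ha : a ∈ Γ.minReps X)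
    (hr : r ∈ Γ.parabolic X) : Γ.coc a r = 1 := by
  obtain ⟨h, hh, b, rfl, hb⟩ := Γ.exists_decomp X a
  have : h = 1 := by
    apply Γ.eq_one_of_mem_minReps hh
    intro x hx
    rw [← Γ.coc_mul_of_trivial hh hb (Γ.gen_mem_parabolic hx)]
    exact ha x hx
  rw [this, one_mul]
  exact hb r hr

/-- `D = D_X · M_X` with uniqueness of both factors. -/
theorem bijOn_mul (X : Set V) :
    Set.BijOn (fun p : Γ.DyerGroup × Γ.DyerGroup => p.1 * p.2)
      ((Γ.parabolic X : Set Γ.DyerGroup) ×ˢ Γ.minReps X) Set.univ := by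
  refine ⟨fun _ _ => trivial, ?_, ?_⟩
  · rintro ⟨h, a⟩ ⟨hh, ha⟩ ⟨h', a'⟩ ⟨hh', ha'⟩ e
    simp only at hh ha hh' ha' e
    have e' : a = h⁻¹ * h' * a' := by rw [mul_assoc, ← e]; group
    have hm : h⁻¹ * h' ∈ Γ.parabolic X := mul_mem (inv_mem hh) hh'
    have h1 : h⁻¹ * h' = 1 := by
      apply Γ.eq_one_of_mem_minReps hm
      intro x hx
      rw [← Γ.coc_mul_of_trivial hm (fun r hr => Γ.coc_eq_one_of_mem_minReps ha' hr)
        (Γ.gen_mem_parabolic hx), ← e']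
      exact ha x hx
    rw [h1, one_mul] at e'
    rw [inv_mul_eq_one.mp h1, e']
  · intro g _
    obtain ⟨h, hh, a, rfl, ha⟩ := Γ.exists_decomp X g
    exact ⟨(h, a), ⟨hh, fun x hx => ha _ (Γ.gen_mem_parabolic hx)⟩, rfl⟩

end Exchange
end DyerGraph

namespace DyerGraph

/-! ### Word length in terms of inversions -/

section Length

/-- The length of `u` in the cyclic group generated by `r` (with value `0` if `u` is not a power
of `r`). -/
noncomputable def cycLength {G : Type*} [Group G] (r u : G) : ℕ :=
  sInf {n | ∃ k : ℤ, k.natAbs = n ∧ r ^ k = u}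

theorem cycLength_one {G : Type*} [Group G] (r : G) : cycLength r 1 = 0 :=
  Nat.sInf_eq_zero.mpr (Or.inl ⟨0, rfl, zpow_zero r⟩)

theorem cycLength_zpow_le {G : Type*} [Group G] (r : G) (k : ℤ) :
    cycLength r (r ^ k) ≤ k.natAbs :=
  Nat.sInf_le ⟨k, rfl, rfl⟩

theorem exists_cycLength {G : Type*} [Group G] {r u : G} (h : u ∈ Subgroup.zpowers r) :
    ∃ k : ℤ, k.natAbs = cycLength r u ∧ r ^ k = u := by
  obtain ⟨k, hk⟩ := h
  exact Nat.sInf_mem (s := {n | ∃ k : ℤ, k.natAbs = n ∧ r ^ k = u}) ⟨k.natAbs, k, rfl, hk⟩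

theorem cycLength_conj {G : Type*} [Group G] (g r u : G) :
    cycLength r (g * u * g⁻¹) = cycLength (g⁻¹ * r * g) u := by
  unfold cycLength
  congr 1
  ext n
  refine exists_congr fun k => and_congr_right fun _ => ?_
  have : (g⁻¹ * r * g) ^ k = g⁻¹ * r ^ k * g := by
    simpa using conj_zpow (i := k) (a := g⁻¹) (b := r)
  rw [this]
  constructor
  · intro h; rw [h]; group
  · rintro rfl; group

theorem cycLength_mul_le {G : Type*} [Group G] {r u u' : G} (h : u ∈ Subgroup.zpowers r)
    (h' : u' ∈ Subgroup.zpowers r) :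
    cycLength r (u * u') ≤ cycLength r u + cycLength r u' := by
  obtain ⟨k, hk, rfl⟩ := exists_cycLength h
  obtain ⟨l, hl, rfl⟩ := exists_cycLength h'
  rw [← hk, ← hl, ← zpow_add]
  exact (cycLength_zpow_le _ _).trans (Int.natAbs_add_le _ _)

variable {V : Type*} (Γ : DyerGraph V)

theorem coc_mem_zpowers (g r : Γ.DyerGroup) : Γ.coc g r ∈ Subgroup.zpowers r := by
  obtain ⟨w, -, rfl⟩ := Γ.exists_val (Γ.mem_parabolic_univ g)
  induction w generalizing r with
  | nil => rw [val_nil, coc_one]; exact one_mem _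
  | cons p w ih =>
    obtain ⟨x, k⟩ := p
    rw [val_cons, coc_mul]
    refine mul_mem ?_ ?_
    · rw [coc_gen_zpow]
      split_ifs with h
      · rw [h]; exact ⟨k, rfl⟩
      · exact one_mem _
    · obtain ⟨n, hn⟩ := ih ((Γ.gen x ^ k)⁻¹ * r * Γ.gen x ^ k)
      rw [← hn]
      refine ⟨n, ?_⟩
      simp only
      rw [← conj_zpow]
      congr 1
      group

theorem finite_coc (g : Γ.DyerGroup) : {r | Γ.coc g r ≠ 1}.Finite := by
  obtain ⟨w, -, rfl⟩ := Γ.exists_val (Γ.mem_parabolic_univ g)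
  have : {r | Γ.coc (Γ.val w) r ≠ 1} ⊆
      ⋃ p ∈ {p | p ∈ w.product w.inits},
        {Γ.val p.2 * Γ.gen p.1.1 * (Γ.val p.2)⁻¹} := by
    intro r hr
    obtain ⟨w₁, x, k, w₂, rfl, rfl⟩ := Γ.exchange hr
    simp only [Set.mem_iUnion]
    refine ⟨((x, k), w₁), ?_, rfl⟩
    simp
  refine Set.Finite.subset (Set.Finite.biUnion (List.finite_toSet _) fun p _ => ?_) this
  exact Set.finite_singleton _

/-- The sum over all reflections `r` of the length of `Γ.coc g r` in the cyclic group `⟨r⟩`. -/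
noncomputable def len (g : Γ.DyerGroup) : ℕ := ∑ᶠ r, cycLength r (Γ.coc g r)

theorem finite_support_len (g : Γ.DyerGroup) :
    (Function.support fun r => cycLength r (Γ.coc g r)).Finite := by
  refine (Γ.finite_coc g).subset fun r hr e => hr ?_
  simp only
  rw [e, cycLength_one]

theorem len_conj (h a : Γ.DyerGroup) :
    (∑ᶠ r, cycLength r (h * Γ.coc a (h⁻¹ * r * h) * h⁻¹)) = Γ.len a := by
  simp only [cycLength_conj]
  rw [len]
  have := finsum_comp_equiv (f := fun r => cycLength r (Γ.coc a r)) (MulAut.conj h⁻¹).toEquiv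
  simpa using this

theorem finite_support_conj (h a : Γ.DyerGroup) :
    (Function.support fun r => cycLength r (h * Γ.coc a (h⁻¹ * r * h) * h⁻¹)).Finite := by
  have h1 := (Γ.finite_support_len a).preimage ((MulAut.conj h⁻¹).injective.injOn)
  refine h1.subset fun r hr => ?_
  simp only [Function.mem_support, cycLength_conj] at hr
  simpa using hr

theorem len_mul_le (h a : Γ.DyerGroup) : Γ.len (h * a) ≤ Γ.len h + Γ.len a := by
  rw [← Γ.len_conj h a, len, len, ← finsum_add_distrib (Γ.finite_support_len h)
    (Γ.finite_support_conj h a)]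
  refine finsum_le_finsum' (Γ.finite_support_len _)
    (((Γ.finite_support_len h).union (Γ.finite_support_conj h a)).subset
      (Function.support_add _ _)) fun r => ?_
  rw [coc_mul]
  refine cycLength_mul_le (Γ.coc_mem_zpowers _ _) ?_
  obtain ⟨n, hn⟩ := Γ.coc_mem_zpowers a (h⁻¹ * r * h)
  rw [← hn]
  refine ⟨n, ?_⟩
  simp only
  rw [← conj_zpow]
  congr 1
  group

/-- Length is additive when no inversion is shared. -/
theorem len_mul (h a : Γ.DyerGroup)
    (hd : ∀ r, Γ.coc h r = 1 ∨ Γ.coc a (h⁻¹ * r * h) = 1) :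
    Γ.len (h * a) = Γ.len h + Γ.len a := by
  rw [← Γ.len_conj h a, len, len, ← finsum_add_distrib (Γ.finite_support_len h)
    (Γ.finite_support_conj h a)]
  refine finsum_congr fun r => ?_
  rw [coc_mul]
  rcases hd r with e | e <;> simp [e, cycLength_one]

theorem len_mul_of_mem {X : Set V} {h a : Γ.DyerGroup} (hh : h ∈ Γ.parabolic X)
    (ha : a ∈ Γ.minReps X) : Γ.len (h * a) = Γ.len h + Γ.len a := by
  refine Γ.len_mul h a fun r => or_iff_not_imp_left.mpr fun hr => ?_
  have := Γ.mem_parabolic_of_coc_ne_one hh hr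
  exact Γ.coc_eq_one_of_mem_minReps ha (mul_mem (mul_mem (inv_mem hh) this) hh)

theorem len_one : Γ.len 1 = 0 := by
  simp [len, coc_one, cycLength_one]

theorem len_gen_zpow (x : V) (k : ℤ) :
    Γ.len (Γ.gen x ^ k) = cycLength (Γ.gen x) (Γ.gen x ^ k) := by
  rw [len, finsum_eq_single _ (Γ.gen x)]
  · rw [coc_gen_zpow, if_pos rfl]
  · intro r hr
    rw [coc_gen_zpow, if_neg hr, cycLength_one]

theorem len_prod_le {X : Set V} (l : List Γ.DyerGroup)
    (hl : ∀ a ∈ l, a ∈ Γ.gen '' X ∪ (Γ.gen '' X)⁻¹) : Γ.len l.prod ≤ l.length := by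
  induction l with
  | nil => simp [len_one]
  | cons a l ih =>
    have ha : Γ.len a ≤ 1 := by
      rcases hl a List.mem_cons_self with ⟨x, _, rfl⟩ | ⟨x, _, e⟩
      · have := cycLength_zpow_le (Γ.gen x) 1
        rw [← len_gen_zpow] at this
        simpa using this
      · have := cycLength_zpow_le (Γ.gen x) (-1)
        rw [← len_gen_zpow, e] at this
        simpa using this
    rw [List.prod_cons, List.length_cons]
    have := ih fun b hb => hl b (List.mem_cons_of_mem _ hb)
    have := Γ.len_mul_le a l.prod
    omega

/-- Spelling each syllable of a reduced word as shortly as possible gives a word of length `len`: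
distinct syllables of a reduced word contribute distinct inversions. -/
theorem exists_word {X : Set V} (w : List (V × ℤ)) (hw : Γ.Red X w) :
    ∃ l : List Γ.DyerGroup, l.length = Γ.len (Γ.val w) ∧
      (∀ a ∈ l, a ∈ Γ.gen '' X ∪ (Γ.gen '' X)⁻¹) ∧ l.prod = Γ.val w := by
  induction w with
  | nil => exact ⟨[], by simp [len_one], by simp, rfl⟩
  | cons p w ih =>
    obtain ⟨x, k⟩ := p
    obtain ⟨l, h1, h2, h3⟩ := ih hw.tail
    have hx : x ∈ X := hw.1 (x, k) List.mem_cons_self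
    have hlen : Γ.len (Γ.val ((x, k) :: w)) =
        cycLength (Γ.gen x) (Γ.gen x ^ k) + Γ.len (Γ.val w) := by
      rw [val_cons, Γ.len_mul, len_gen_zpow]
      intro r
      by_cases hr : r = Γ.gen x
      · right
        have : (Γ.gen x ^ k)⁻¹ * r * Γ.gen x ^ k = Γ.gen x := by rw [hr]; group
        rw [this, hw.coc_tail]
      · left; rw [coc_gen_zpow, if_neg hr]
    obtain ⟨k', hk', e⟩ := exists_cycLength (r := Γ.gen x) (u := Γ.gen x ^ k) ⟨k, rfl⟩
    obtain ⟨s, hs, es⟩ : ∃ s ∈ Γ.gen '' X ∪ (Γ.gen '' X)⁻¹, s ^ k'.natAbs = Γ.gen x ^ k := by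
      rcases Int.natAbs_eq k' with h | h
      · refine ⟨Γ.gen x, Or.inl ⟨x, hx, rfl⟩, ?_⟩
        rw [← e, ← zpow_natCast, ← h]
      · refine ⟨(Γ.gen x)⁻¹, Or.inr ⟨x, hx, by simp⟩, ?_⟩
        rw [← e, inv_pow, ← zpow_natCast, ← zpow_neg, ← h]
    refine ⟨List.replicate k'.natAbs s ++ l, ?_, ?_, ?_⟩
    · rw [hlen, List.length_append, List.length_replicate, h1, hk']
    · intro a ha
      rcases List.mem_append.mp ha with ha | ha
      · rw [List.eq_of_mem_replicate ha]; exact hs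
      · exact h2 a ha
    · simp [h3, es]

/-- Word length in `D_X` is computed by inversions, and hence agrees with word length in `D`. -/
theorem wordLength_eq_len {X : Set V} {h : Γ.DyerGroup} (hh : h ∈ Γ.parabolic X) :
    wordLength (Γ.gen '' X) h = Γ.len h := by
  obtain ⟨w, hw, rfl⟩ := Γ.exists_red hh
  apply le_antisymm
  · exact Nat.sInf_le (Γ.exists_word w hw)
  · refine le_csInf ⟨_, Γ.exists_word w hw⟩ ?_
    rintro n ⟨l, rfl, hl, e⟩
    rw [← e]
    exact Γ.len_prod_le l hl

theorem len_eq_zero {g : Γ.DyerGroup} (h : Γ.len g = 0) : g = 1 := by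
  obtain ⟨w, hw, e⟩ := Γ.exists_red (Γ.mem_parabolic_univ g)
  obtain ⟨l, h1, -, h3⟩ := Γ.exists_word w hw
  rw [e, h, List.length_eq_zero_iff] at h1
  rw [← e, ← h3, h1, List.prod_nil]

theorem finite_len [Finite V] (n : ℕ) : {g | Γ.len g = n}.Finite := by
  set S : Set Γ.DyerGroup := Γ.gen '' Set.univ ∪ (Γ.gen '' Set.univ)⁻¹ with hS
  have hSf : S.Finite := (Set.toFinite _).union (Set.toFinite _).inv
  have : Finite S := hSf
  have hf := (List.finite_length_eq S n).image (fun l => (l.map Subtype.val).prod)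
  refine hf.subset ?_
  rintro g rfl
  obtain ⟨w, hw, e⟩ := Γ.exists_red (Γ.mem_parabolic_univ g)
  obtain ⟨l, h1, h2, h3⟩ := Γ.exists_word w hw
  rw [e] at h1 h3
  lift l to List S using h2
  exact ⟨l, by simpa using h1, by simpa using h3⟩

end Length
end DyerGraph

namespace DyerGraph

/-! ### Non-adjacent generators -/

section Amalgam

open Monoid

variable {V : Type*} (Γ : DyerGraph V)

/-- `Alternating H i j l`: `l` is the product of a non-empty word of the amalgam of two copies of
`G` over `H`, whose letters lie outside `H` and alternate between the two copies, starting in copy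
`i` and ending in copy `j`. -/
inductive Alternating {G : Type*} [Group G] (H : Subgroup G) :
    Bool → Bool → PushoutI (fun _ : Bool => H.subtype) → Prop
  | single (i : Bool) (s : G) (hs : s ∉ H) : Alternating H i i (PushoutI.of i s)
  | append {i j k l : Bool} {p q : PushoutI (fun _ : Bool => H.subtype)} (h₁ : Alternating H i j p)
      (hne : j ≠ k) (h₂ : Alternating H k l q) : Alternating H i l (p * q)

theorem Alternating.inv {G : Type*} [Group G] {H : Subgroup G} {i j : Bool}
    {p : PushoutI (fun _ : Bool => H.subtype)} (h : Alternating H i j p) :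
    Alternating H j i p⁻¹ := by
  induction h with
  | single i s hs =>
    rw [← map_inv]
    exact .single i _ (fun h => hs (by simpa using inv_mem h))
  | append _ hne _ ih₁ ih₂ =>
    rw [mul_inv_rev]
    exact .append ih₂ hne.symm ih₁

theorem Alternating.ne_one {G : Type*} [Group G] {H : Subgroup G} {i j : Bool}
    {p : PushoutI (fun _ : Bool => H.subtype)} (h : Alternating H i j p) : p ≠ 1 := by
  have key : ∃ w : CoprodI.NeWord (fun _ : Bool => G) i j, PushoutI.ofCoprodI w.prod = p ∧
      ∀ a ∈ w.toList, a.2 ∉ H := by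
    induction h with
    | single i s hs =>
      have : s ≠ 1 := by rintro rfl; exact hs (one_mem H)
      exact ⟨.singleton s this, by simp, by simpa [CoprodI.NeWord.toList] using hs⟩
    | append _ hne _ ih₁ ih₂ =>
      obtain ⟨w₁, e₁, h₁⟩ := ih₁
      obtain ⟨w₂, e₂, h₂⟩ := ih₂
      refine ⟨.append w₁ hne w₂, by simp [e₁, e₂], ?_⟩
      intro a ha
      rcases List.mem_append.mp ha with ha | ha
      exacts [h₁ a ha, h₂ a ha]
  rintro rfl
  obtain ⟨w, e, hw⟩ := key
  have hred : PushoutI.Reduced (fun _ : Bool => H.subtype) w.toWord := by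
    intro a ha
    rw [Subgroup.range_subtype]
    exact hw a ha
  have := hred.eq_empty_of_mem_range (fun _ => Subgroup.subtype_injective H) (by
    change PushoutI.ofCoprodI w.prod ∈ _
    rw [e]; exact one_mem _)
  exact w.toList_ne_nil (congrArg CoprodI.Word.toList this)

/-- The map of `D` to the amalgam of two copies of `D` over `D_{lk(v)}` that sends `v` into one
copy and all other generators into the other. -/
theorem exists_amalgamHom (v : V) :
    ∃ θ : Γ.DyerGroup →* PushoutI (fun _ : Bool => (Γ.parabolic {y | Γ.Adj v y}).subtype),
      ∀ x, θ (Γ.gen x) = PushoutI.of (decide (x = v)) (Γ.gen x) := by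
  apply Γ.exists_hom
  · intro x hx
    rw [← map_pow, Γ.gen_pow x hx, map_one]
  · intro x y hxy
    -- The generator of a neighbour of `v` is the same element in both copies.
    have hlk : ∀ z, Γ.Adj v z → ∀ i j : Bool,
        (PushoutI.of i (Γ.gen z) : PushoutI (fun _ : Bool =>
          (Γ.parabolic {y | Γ.Adj v y}).subtype)) = PushoutI.of j (Γ.gen z) := by
      intro z hz i j
      have hmem : Γ.gen z ∈ Γ.parabolic {y | Γ.Adj v y} := Γ.gen_mem_parabolic hz
      have h1 := fun i => PushoutI.of_apply_eq_base
        (fun _ : Bool => (Γ.parabolic {y | Γ.Adj v y}).subtype) i ⟨_, hmem⟩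
      exact (h1 i).trans (h1 j).symm
    have key : ∃ i : Bool,
        (PushoutI.of (decide (x = v)) (Γ.gen x) : PushoutI (fun _ : Bool =>
          (Γ.parabolic {y | Γ.Adj v y}).subtype)) = PushoutI.of i (Γ.gen x) ∧
        (PushoutI.of (decide (y = v)) (Γ.gen y) : PushoutI (fun _ : Bool =>
          (Γ.parabolic {y | Γ.Adj v y}).subtype)) = PushoutI.of i (Γ.gen y) := by
      by_cases hx : x = v
      · exact ⟨decide (x = v), rfl, hlk y (hx ▸ hxy) _ _⟩
      · by_cases hy : y = v
        · exact ⟨decide (y = v), hlk x (hy ▸ Γ.symm hxy) _ _, rfl⟩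
        · exact ⟨false, by simp [hx], by simp [hy]⟩
    obtain ⟨i, e1, e2⟩ := key
    rw [e1, e2, ← map_altProd, ← map_altProd, Γ.gen_braid hxy]

/-- A reduced word in two non-adjacent generators is alternating in the amalgam. -/
theorem Red.alternating {v y : V} (hyv : y ≠ v) (hadj : ¬ Γ.Adj v y)
    {θ : Γ.DyerGroup →* PushoutI (fun _ : Bool => (Γ.parabolic {y | Γ.Adj v y}).subtype)}
    (hθ : ∀ x, θ (Γ.gen x) = PushoutI.of (decide (x = v)) (Γ.gen x))
    {x : V} {k : ℤ} {w : List (V × ℤ)} (hw : Γ.Red {v, y} ((x, k) :: w)) :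
    ∃ j, Alternating (Γ.parabolic {y | Γ.Adj v y}) (decide (x = v)) j
      (θ (Γ.val ((x, k) :: w))) := by
  have hmem : ∀ {x k w}, Γ.Red {v, y} ((x, k) :: w) →
      Alternating (Γ.parabolic {y | Γ.Adj v y}) (decide (x = v)) (decide (x = v))
        (θ (Γ.gen x ^ k)) := by
    intro x k w hw
    rw [map_zpow, hθ, ← map_zpow]
    refine .single _ _ fun h => Red.head_ne_one Γ hw (Γ.zpow_eq_one_of_mem ?_ k h)
    rcases hw.1 (x, k) List.mem_cons_self with e | e
    · simp only at e; rw [e]; exact Γ.loopless v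
    · simp only [Set.mem_singleton_iff] at e; rw [e]; exact hadj
  induction w generalizing x k with
  | nil => exact ⟨_, by simpa using hmem hw⟩
  | cons p w ih =>
    obtain ⟨z, l⟩ := p
    obtain ⟨j, hj⟩ := ih hw.tail
    refine ⟨j, ?_⟩
    rw [val_cons, map_mul]
    refine .append (hmem hw) ?_ hj
    -- Consecutive syllables have distinct letters, as equal ones could be merged.
    have hne : x ≠ z := by
      rintro rfl
      have := hw.tail.coc_head
      rw [hw.coc_tail] at this
      exact Red.head_ne_one Γ (Red.tail Γ hw) this.symm
    have hx := hw.1 (x, k) List.mem_cons_self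
    have hz := hw.1 (z, l) (by simp)
    simp only [Set.mem_insert_iff, Set.mem_singleton_iff] at hx hz
    rcases hx with rfl | rfl <;> rcases hz with rfl | rfl
    · exact absurd rfl hne
    · simp [hyv]
    · simp [hyv]
    · exact absurd rfl hne

/-- Two generators that are both inversions of the same element are equal or adjacent. -/
theorem adj_of_coc_ne_one {v y : V} (hyv : y ≠ v) {g : Γ.DyerGroup}
    (h1 : Γ.coc g (Γ.gen v) ≠ 1) (h2 : Γ.coc g (Γ.gen y) ≠ 1) : Γ.Adj v y := by
  by_contra hadj
  obtain ⟨θ, hθ⟩ := Γ.exists_amalgamHom v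
  obtain ⟨h, hh, a, rfl, ha⟩ := Γ.exists_decomp {v, y} g
  -- A generator that is an inversion of `h` can be made the first letter of a reduced word.
  have key : ∀ x ∈ ({v, y} : Set V), Γ.coc (h * a) (Γ.gen x) ≠ 1 →
      ∃ j, Alternating (Γ.parabolic {y | Γ.Adj v y}) (decide (x = v)) j (θ h) := by
    intro x hx hne
    rw [Γ.coc_mul_of_trivial hh ha (Γ.gen_mem_parabolic hx)] at hne
    obtain ⟨w, hw, rfl⟩ := Γ.exists_red hh
    obtain ⟨w₁, z, l, w₂, rfl, er⟩ := Γ.exchange hne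
    have e : Γ.gen x ^ l = Γ.val w₁ * Γ.gen z ^ l * (Γ.val w₁)⁻¹ := by
      rw [er, conj_zpow]
    have ev : Γ.val ((x, l) :: (w₁ ++ w₂)) = Γ.val (w₁ ++ (z, l) :: w₂) := by
      simp only [val_cons, val_append, e]
      group
    have hred : Γ.Red {v, y} ((x, l) :: (w₁ ++ w₂)) := by
      refine ⟨?_, fun w' hw' e' => ?_⟩
      · intro q hq
        simp only [List.mem_cons, List.mem_append] at hq
        rcases hq with rfl | hq | hq
        · exact hx
        · exact hw.1 q (by simp [hq])
        · exact hw.1 q (by simp [hq])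
      · have := hw.2 w' hw' (e'.trans ev)
        simpa [Nat.add_assoc] using this
    rw [← ev]
    exact Red.alternating Γ hyv hadj hθ hred
  obtain ⟨j₁, a₁⟩ := key v (by simp) h1
  obtain ⟨j₂, a₂⟩ := key y (by simp) h2
  have := Alternating.append a₁.inv (by simp [hyv]) a₂
  exact this.ne_one (by simp)

end Amalgam
end DyerGraph

namespace DyerGraph

/-! ### Growth series -/

section Growth

variable {V : Type*} (Γ : DyerGraph V)

/-- The generating series of a subset `A` of `D` with respect to the length `len`. -/
noncomputable def lenSeries (A : Set Γ.DyerGroup) : PowerSeries ℤ :=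
  PowerSeries.mk fun n => (Set.ncard {g ∈ A | Γ.len g = n} : ℤ)

theorem growthSeries_parabolic (X : Set V) :
    growthSeries (Γ.gen '' X) (Γ.parabolic X : Set Γ.DyerGroup) =
      Γ.lenSeries (Γ.parabolic X : Set Γ.DyerGroup) := by
  ext n
  simp only [growthSeries, lenSeries, PowerSeries.coeff_mk]
  congr 2
  ext g
  simp only [Set.mem_ofPred_eq, SetLike.mem_coe]
  exact and_congr_right fun hg => by rw [Γ.wordLength_eq_len hg]

theorem growthSeries_univ :
    growthSeries (Set.range Γ.gen) (Set.univ : Set Γ.DyerGroup) = Γ.lenSeries Set.univ := by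
  have h := Γ.growthSeries_parabolic Set.univ
  have e : (Γ.parabolic Set.univ : Set Γ.DyerGroup) = Set.univ :=
    Set.eq_univ_of_forall fun g => Γ.mem_parabolic_univ g
  rwa [Set.image_univ, e] at h

theorem constantCoeff_lenSeries {A : Set Γ.DyerGroup} (hA : 1 ∈ A) :
    PowerSeries.constantCoeff (Γ.lenSeries A) = 1 := by
  have e : {g ∈ A | Γ.len g = 0} = {1} := by
    ext g
    constructor
    · exact fun h => Γ.len_eq_zero h.2
    · rintro rfl
      exact ⟨hA, Γ.len_one⟩
  rw [← PowerSeries.coeff_zero_eq_constantCoeff_apply, lenSeries, PowerSeries.coeff_mk, e]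
  simp

theorem isUnit_lenSeries {A : Set Γ.DyerGroup} (hA : 1 ∈ A) : IsUnit (Γ.lenSeries A) := by
  rw [PowerSeries.isUnit_iff_constantCoeff, Γ.constantCoeff_lenSeries hA]
  exact isUnit_one

theorem lenSeries_one : Γ.lenSeries {1} = 1 := by
  ext n
  rw [lenSeries, PowerSeries.coeff_mk, PowerSeries.coeff_one]
  split_ifs with hn
  · have e : {g ∈ ({1} : Set Γ.DyerGroup) | Γ.len g = n} = {1} := by
      ext g
      constructor
      · exact fun h => h.1
      · rintro rfl
        exact ⟨rfl, by rw [Γ.len_one, hn]⟩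
    rw [e]
    simp
  · have e : {g ∈ ({1} : Set Γ.DyerGroup) | Γ.len g = n} = ∅ := by
      ext g
      simp only [Set.mem_ofPred_eq, Set.mem_singleton_iff, Set.mem_empty_iff_false, iff_false]
      rintro ⟨rfl, h⟩
      exact hn (by rw [← h, Γ.len_one])
    rw [e]
    simp

theorem one_mem_minReps (X : Set V) : (1 : Γ.DyerGroup) ∈ Γ.minReps X := by
  intro x _
  simp [Γ.coc_one]

variable [Finite V]

theorem lenSeries_union_add_inter (A B : Set Γ.DyerGroup) :
    Γ.lenSeries (A ∪ B) + Γ.lenSeries (A ∩ B) = Γ.lenSeries A + Γ.lenSeries B := by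
  ext n
  simp only [lenSeries, map_add, PowerSeries.coeff_mk]
  have h := Set.ncard_union_add_ncard_inter {g ∈ A | Γ.len g = n} {g ∈ B | Γ.len g = n}
    ((Γ.finite_len n).subset fun g hg => hg.2) ((Γ.finite_len n).subset fun g hg => hg.2)
  have e₁ : {g ∈ A | Γ.len g = n} ∪ {g ∈ B | Γ.len g = n} = {g ∈ A ∪ B | Γ.len g = n} := by
    ext g
    simp only [Set.mem_union, Set.mem_ofPred_eq]
    tauto
  have e₂ : {g ∈ A | Γ.len g = n} ∩ {g ∈ B | Γ.len g = n} = {g ∈ A ∩ B | Γ.len g = n} := by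
    ext g
    simp only [Set.mem_inter_iff, Set.mem_ofPred_eq]
    tauto
  rw [e₁, e₂] at h
  exact_mod_cast h

/-- The series form of the unique, length-additive factorization `D = D_X · M_X`. -/
theorem lenSeries_univ_eq_mul (X : Set V) :
    Γ.lenSeries Set.univ =
      Γ.lenSeries (Γ.parabolic X : Set Γ.DyerGroup) * Γ.lenSeries (Γ.minReps X) := by
  have hcard : ∀ (A : Set Γ.DyerGroup) (n : ℕ), Set.ncard {g ∈ A | Γ.len g = n} =
      ((Γ.finite_len n).toFinset.filter (· ∈ A)).card := by
    intro A n
    rw [← Set.ncard_coe_finset]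
    congr 1
    ext g
    simp [and_comm]
  ext n
  rw [PowerSeries.coeff_mul]
  simp only [lenSeries, PowerSeries.coeff_mk, hcard]
  norm_cast
  simp only [← Finset.card_product]
  rw [← Finset.card_sigma]
  symm
  have hb := Γ.bijOn_mul X
  refine Finset.card_nbij (fun q => q.2.1 * q.2.2) ?_ ?_ ?_
  · rintro ⟨⟨i, j⟩, h, a⟩ hq
    simp only [Finset.mem_sigma, Finset.mem_product, Finset.mem_filter,
      Set.Finite.mem_toFinset, Set.mem_ofPred_eq, SetLike.mem_coe, Set.mem_univ, and_true] at hq ⊢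
    obtain ⟨hn, ⟨hi, hh⟩, hj, ha⟩ := hq
    rw [Γ.len_mul_of_mem hh ha, hi, hj]
    exact Finset.HasAntidiagonal.mem_antidiagonal.mp hn
  · rintro ⟨⟨i, j⟩, h, a⟩ hq ⟨⟨i', j'⟩, h', a'⟩ hq' e
    simp only [Finset.mem_sigma, Finset.mem_product,
      Finset.mem_filter, Set.Finite.mem_toFinset, Set.mem_ofPred_eq, SetLike.mem_coe] at hq hq'
    obtain ⟨hn, ⟨hi, hh⟩, hj, ha⟩ := hq
    obtain ⟨hn', ⟨hi', hh'⟩, hj', ha'⟩ := hq'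
    have := hb.injOn (x₁ := (h, a)) (x₂ := (h', a')) ⟨hh, ha⟩ ⟨hh', ha'⟩ e
    obtain ⟨rfl, rfl⟩ := Prod.mk.inj this
    subst hi hj hi' hj'
    rfl
  · intro g hg
    obtain ⟨⟨h, a⟩, ⟨hh, ha⟩, e⟩ := hb.surjOn (Set.mem_univ g)
    simp only at e
    refine ⟨⟨(Γ.len h, Γ.len a), h, a⟩, ?_, e⟩
    simp only [Finset.mem_coe, Finset.mem_filter, Set.Finite.mem_toFinset,
      Set.mem_ofPred_eq, Set.mem_univ, and_true] at hg
    simp only [Finset.mem_sigma, Finset.mem_product,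
      Finset.mem_filter, Set.Finite.mem_toFinset, Set.mem_ofPred_eq, SetLike.mem_coe]
    refine ⟨?_, ⟨trivial, hh⟩, trivial, ha⟩
    exact Finset.HasAntidiagonal.mem_antidiagonal.mpr (by
      rw [← hg, ← e]; exact (Γ.len_mul_of_mem hh ha).symm)

/-- The inverse growth series of `D_X` is that of `D` times the series of `M_X`. -/
theorem inverse_growthSeries (X : Set V) :
    Ring.inverse (growthSeries (Γ.gen '' X) (Γ.parabolic X : Set Γ.DyerGroup)) =
      Γ.lenSeries (Γ.minReps X) * Ring.inverse (Γ.lenSeries Set.univ) := by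
  rw [Γ.growthSeries_parabolic, Γ.lenSeries_univ_eq_mul X, Ring.mul_inverse_rev, ← mul_assoc,
    Ring.mul_inverse_cancel _ (Γ.isUnit_lenSeries (Γ.one_mem_minReps X)), one_mul]

/-- Only the identity has no generator as an inversion, so inclusion–exclusion applies to
`M_{V∖{v}}` and `M_{st(v)}`: their union is `M_{lk(v)}` because `v` and a vertex outside `st(v)`
are never both inversions of the same element. -/
theorem lenSeries_minReps_link (v : V) :
    Γ.lenSeries (Γ.minReps {y | Γ.Adj v y}) + 1 =
      Γ.lenSeries (Γ.minReps (Set.univ \ {v})) +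
        Γ.lenSeries (Γ.minReps (insert v {y | Γ.Adj v y})) := by
  rw [← Γ.lenSeries_union_add_inter, ← Γ.lenSeries_one]
  congr 2
  · ext a
    constructor
    · intro ha
      by_cases hv : Γ.coc a (Γ.gen v) = 1
      · right
        rintro x (rfl | hx)
        exacts [hv, ha x hx]
      · left
        rintro y ⟨-, hy⟩
        by_contra hne
        exact hne (ha y (Γ.adj_of_coc_ne_one hy hv hne))
    · rintro (ha | ha) y hy
      · refine ha y ⟨trivial, ?_⟩
        rintro rfl
        exact Γ.loopless _ hy
      · exact ha y (Or.inr hy)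
  · ext a
    constructor
    · rintro rfl
      exact ⟨Γ.one_mem_minReps _, Γ.one_mem_minReps _⟩
    · rintro ⟨h₁, h₂⟩
      refine Γ.eq_one_of_mem_minReps (Γ.mem_parabolic_univ a) fun x _ => ?_
      by_cases hx : x = v
      · exact h₂ x (Or.inl hx)
      · exact h₁ x ⟨trivial, hx⟩

end Growth
end DyerGraph


/-- If `st(v) ≠ V`, then
`𝒢_{(D,V)}⁻¹ = 𝒢_{(D_{V∖{v}},V∖{v})}⁻¹ + 𝒢_{(D_{st(v)},st(v))}⁻¹ − 𝒢_{(D_{lk(v)},lk(v))}⁻¹`. -/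
theorem growthSeries_inv_amalgam
    {V : Type} [Fintype V] (Γ : DyerGraph V) (v : V)
    (hst : (insert v {y | Γ.Adj v y} : Set V) ≠ Set.univ) :
    Ring.inverse (growthSeries (Set.range Γ.gen) (Set.univ : Set Γ.DyerGroup)) =
      Ring.inverse (growthSeries (Γ.gen '' (Set.univ \ {v}))
        (Γ.parabolic (Set.univ \ {v}) : Set Γ.DyerGroup)) +
      Ring.inverse (growthSeries (Γ.gen '' insert v {y | Γ.Adj v y})
        (Γ.parabolic (insert v {y | Γ.Adj v y}) : Set Γ.DyerGroup)) -
      Ring.inverse (growthSeries (Γ.gen '' {y | Γ.Adj v y})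
        (Γ.parabolic {y | Γ.Adj v y} : Set Γ.DyerGroup)) := by
  rw [Γ.growthSeries_univ, Γ.inverse_growthSeries, Γ.inverse_growthSeries,
    Γ.inverse_growthSeries]
  linear_combination (Ring.inverse (Γ.lenSeries Set.univ)) * Γ.lenSeries_minReps_link v
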